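/- Let φ : M^m → ℝ^{m+1} be an oriented isometric immersion with shape operator A, principal curvatures κ₁,…,κ_m, mean curvature H₁ = (1/m)Σκ_i and second mean curvature H₂ = S₂/C(m,2). If H₂ > 0 at every point of M, then (after choosing the unit normal N so that H₁ > 0) one has m²H₁² = Σ_j κ_j² + m(m−1)H₂ > κ_i² for every i = 1,…,m; consequently every eigenvalue μ_{i,1} = mH₁ − κ_i of the first Newton tensor P₁ = mH₁ I − A is positive, i.e. P₁ is positive definite and the operator L₁ = tr(P₁ ∘ Hess) is elliptic. -/

import Mathlib

/-!
Write `S₁ = mH₁` and `m(m-1)H₂ = 2S₂`. Expanding `(∑ κ_j)²` gives `S₁² = ∑ κ_j² + 2S₂`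
(`sq_sum_eq_sum_sq_add_two_mul_esymm`), so `S₂ > 0` forces `κ_i² ≤ ∑ κ_j² < S₁²`. As `S₁ > 0`,
this yields `κ_i ≤ |κ_i| < S₁`. In the principal frame `P₁` is diagonal with entries `S₁ - κ_i`,
so `⟪P₁ v, v⟫ = ∑ (S₁ - κ_i) ⟪e_i, v⟫²` (`Hyp.inner_newtonP_one`), which is positive for `v ≠ 0`
by Parseval.
-/

open scoped RealInnerProductSpace

/-- Abstract data of an oriented isometrically immersed hypersurface `φ : M^m → ℝ^{m+1}`:
tangent spaces with the induced inner product, the immersion with its differential (an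
isometry on each tangent space), a global unit normal `N`, and the shape operator with
its principal curvatures and a principal orthonormal frame. -/
structure Hyp (m : ℕ) where
  M : Type
  [top : TopologicalSpace M]
  TM : M → Type
  [tmN : ∀ x, NormedAddCommGroup (TM x)]
  [tmI : ∀ x, InnerProductSpace ℝ (TM x)]
  [tmF : ∀ x, FiniteDimensional ℝ (TM x)]
  dimEq : ∀ x, Module.finrank ℝ (TM x) = m
  /-- The immersion `φ : M → ℝ^{m+1}`. -/
  imm : M → EuclideanSpace ℝ (Fin (m + 1))
  /-- The differential of the immersion. -/
  dimm : ∀ x, TM x →ₗ[ℝ] EuclideanSpace ℝ (Fin (m + 1))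
  /-- The immersion is isometric. -/
  isometric : ∀ (x) (v : TM x), ‖dimm x v‖ = ‖v‖
  /-- The global unit normal giving the orientation. -/
  N : M → EuclideanSpace ℝ (Fin (m + 1))
  N_unit : ∀ x, ‖N x‖ = 1
  N_orth : ∀ (x) (v : TM x), ⟪dimm x v, N x⟫ = 0
  /-- The shape operator with respect to `N`. -/
  shape : ∀ x, TM x →ₗ[ℝ] TM x
  /-- The principal curvatures. -/
  κ : M → Fin m → ℝ
  /-- An orthonormal frame of principal directions. -/
  frame : ∀ x, OrthonormalBasis (Fin m) ℝ (TM x)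
  shape_eigen : ∀ x i, shape x (frame x i) = κ x i • frame x i

attribute [instance] Hyp.top Hyp.tmN Hyp.tmI Hyp.tmF

namespace Hyp

variable {m : ℕ}

/-- `S_k`, the `k`-th elementary symmetric function of the principal curvatures. -/
def Sym (S : Hyp m) (k : ℕ) (x : S.M) : ℝ :=
  ∑ t ∈ Finset.powersetCard k (Finset.univ : Finset (Fin m)), ∏ i ∈ t, S.κ x i

/-- The `k`-th mean curvature `H_k = S_k / (m choose k)`. -/
noncomputable def Hk (S : Hyp m) (k : ℕ) (x : S.M) : ℝ :=
  S.Sym k x / (m.choose k : ℝ)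

/-- The Newton tensors, `P_0 = I`, `P_k = S_k I − A P_{k−1}`. -/
def NewtonP (S : Hyp m) : ℕ → ∀ x : S.M, S.TM x →ₗ[ℝ] S.TM x
  | 0 => fun _ => LinearMap.id
  | k + 1 => fun x => S.Sym (k + 1) x • LinearMap.id - S.shape x ∘ₗ S.NewtonP k x

end Hyp

theorem sq_sum_eq_sum_sq_add_two_mul_esymm {ι : Type*} [DecidableEq ι] (s : Finset ι)
    (f : ι → ℝ) :
    (∑ i ∈ s, f i) ^ 2 =
      ∑ i ∈ s, f i ^ 2 + 2 * ∑ t ∈ Finset.powersetCard 2 s, ∏ i ∈ t, f i := by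
  induction s using Finset.induction_on with
  | empty => rw [Finset.powersetCard_eq_empty.2 (by simp)]; simp
  | insert a s ha ih =>
    have hdisj : Disjoint (Finset.powersetCard 2 s)
        ((Finset.powersetCard 1 s).image (insert a)) := by
      rw [Finset.disjoint_left]
      intro t ht ht'
      obtain ⟨u, -, rfl⟩ := Finset.mem_image.1 ht'
      exact ha ((Finset.mem_powersetCard.1 ht).1 (Finset.mem_insert_self a u))
    have hinj : Set.InjOn (insert a) (Finset.powersetCard 1 s : Set (Finset ι)) := by
      intro t ht u hu h
      have hat : a ∉ t := fun h' => ha ((Finset.mem_powersetCard.1 ht).1 h')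
      have hau : a ∉ u := fun h' => ha ((Finset.mem_powersetCard.1 hu).1 h')
      rw [← Finset.erase_insert hat, ← Finset.erase_insert hau, h]
    -- Two-element subsets of `insert a s` that contain `a` are the `{a, i}` with `i ∈ s`.
    have hpair : ∑ t ∈ Finset.powersetCard 1 s, ∏ i ∈ insert a t, f i = f a * ∑ i ∈ s, f i := by
      rw [Finset.powersetCard_one, Finset.sum_map, Finset.mul_sum]
      refine Finset.sum_congr rfl fun i hi => ?_
      have hai : a ≠ i := fun h => ha (h ▸ hi)
      simp [Finset.prod_pair hai]
    rw [Finset.sum_insert ha, Finset.sum_insert ha, Finset.powersetCard_succ_insert ha,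
      Finset.sum_union hdisj, Finset.sum_image hinj, hpair]
    linear_combination ih

namespace Hyp

theorem sym_one {m : ℕ} (S : Hyp m) (x : S.M) : S.Sym 1 x = ∑ i, S.κ x i := by
  simp [Sym, Finset.powersetCard_one]

theorem mul_Hk_one {m : ℕ} (S : Hyp m) (hm : 2 ≤ m) (x : S.M) : (m : ℝ) * S.Hk 1 x = S.Sym 1 x := by
  have : (m : ℝ) ≠ 0 := by positivity
  rw [Hk, Nat.choose_one_right]
  field_simp

theorem mul_Hk_two {m : ℕ} (S : Hyp m) (hm : 2 ≤ m) (x : S.M) :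
    (m : ℝ) * ((m : ℝ) - 1) * S.Hk 2 x = 2 * S.Sym 2 x := by
  have h0 : (m : ℝ) ≠ 0 := by positivity
  have h1 : (m : ℝ) - 1 ≠ 0 := by
    have : (2 : ℝ) ≤ m := by exact_mod_cast hm
    linarith
  rw [Hk, Nat.cast_choose_two]
  field_simp

theorem newtonP_one_apply {m : ℕ} (S : Hyp m) (x : S.M) (v : S.TM x) :
    S.NewtonP 1 x v = S.Sym 1 x • v - S.shape x v := by
  simp [NewtonP]

theorem newtonP_one_frame {m : ℕ} (S : Hyp m) (x : S.M) (i : Fin m) :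
    S.NewtonP 1 x (S.frame x i) = (S.Sym 1 x - S.κ x i) • S.frame x i := by
  rw [newtonP_one_apply, S.shape_eigen, sub_smul]

/-- The quadratic form of `P₁` is diagonal in the principal frame. -/
theorem inner_newtonP_one {m : ℕ} (S : Hyp m) (x : S.M) (v : S.TM x) :
    ⟪S.NewtonP 1 x v, v⟫ = ∑ i, (S.Sym 1 x - S.κ x i) * ⟪S.frame x i, v⟫ ^ 2 := by
  have h : S.NewtonP 1 x v =
      ∑ i, (⟪S.frame x i, v⟫ * (S.Sym 1 x - S.κ x i)) • S.frame x i := by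
    conv_lhs => rw [← (S.frame x).sum_repr' v]
    rw [map_sum]
    refine Finset.sum_congr rfl fun i _ => ?_
    rw [map_smul, newtonP_one_frame, smul_smul]
  rw [h, sum_inner]
  refine Finset.sum_congr rfl fun i _ => ?_
  rw [real_inner_smul_left]
  ring

end Hyp

/-- Remark 4.2: if `H₂ > 0` everywhere and the unit normal is chosen so that `H₁ > 0`,
then `m²H₁² = Σ κ_j² + m(m−1)H₂ > κ_i²` for every `i`; consequently every eigenvalue
`mH₁ − κ_i` of the first Newton tensor `P₁ = mH₁ I − A` is positive, i.e. `P₁` is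
positive definite and the operator `L₁ = tr(P₁ ∘ Hess)` is elliptic. -/
theorem first_newton_tensor_positive_definite
    (m : ℕ) (hm : 2 ≤ m) (S : Hyp m)
    (hH2 : ∀ x : S.M, 0 < S.Hk 2 x)
    (hH1 : ∀ x : S.M, 0 < S.Hk 1 x) :
    ∀ x : S.M,
      ((m : ℝ) ^ 2 * S.Hk 1 x ^ 2 =
        (∑ j : Fin m, S.κ x j ^ 2) + (m : ℝ) * ((m : ℝ) - 1) * S.Hk 2 x) ∧
      (∀ i : Fin m, S.κ x i ^ 2 < (m : ℝ) ^ 2 * S.Hk 1 x ^ 2) ∧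
      (∀ i : Fin m, 0 < (m : ℝ) * S.Hk 1 x - S.κ x i) ∧
      ∀ v : S.TM x, v ≠ 0 → 0 < ⟪S.NewtonP 1 x v, v⟫ := by
  intro x
  have hm0 : (0 : ℝ) < m := by positivity
  have hm1 : (0 : ℝ) < (m : ℝ) - 1 := by
    have : (2 : ℝ) ≤ m := by exact_mod_cast hm
    linarith
  have hmain : (m : ℝ) ^ 2 * S.Hk 1 x ^ 2 =
      (∑ j : Fin m, S.κ x j ^ 2) + (m : ℝ) * ((m : ℝ) - 1) * S.Hk 2 x := by
    rw [← mul_pow, S.mul_Hk_one hm, S.mul_Hk_two hm, S.sym_one,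
      sq_sum_eq_sum_sq_add_two_mul_esymm]
    rfl
  have hsq : ∀ i : Fin m, S.κ x i ^ 2 < (m : ℝ) ^ 2 * S.Hk 1 x ^ 2 := by
    intro i
    have h1 : S.κ x i ^ 2 ≤ ∑ j : Fin m, S.κ x j ^ 2 :=
      Finset.single_le_sum (f := fun j => S.κ x j ^ 2) (fun j _ => sq_nonneg _)
        (Finset.mem_univ i)
    have h2 := mul_pos (mul_pos hm0 hm1) (hH2 x)
    linarith
  have hpos : ∀ i : Fin m, 0 < (m : ℝ) * S.Hk 1 x - S.κ x i := by
    intro i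
    have h := hsq i
    rw [← mul_pow] at h
    exact sub_pos.2 (lt_of_pow_lt_pow_left₀ 2 (mul_pos hm0 (hH1 x)).le h)
  refine ⟨hmain, hsq, hpos, fun v hv => ?_⟩
  rw [S.mul_Hk_one hm] at hpos
  rw [S.inner_newtonP_one]
  -- A nonzero vector has a nonzero coordinate in the frame.
  obtain ⟨i, hi⟩ : ∃ i, ⟪S.frame x i, v⟫ ≠ 0 := by
    by_contra! h
    apply hv
    rw [← (S.frame x).sum_repr' v]
    simp [h]
  exact Finset.sum_pos' (fun j _ => mul_nonneg (hpos j).le (sq_nonneg _))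
    ⟨i, Finset.mem_univ i, mul_pos (hpos i) (by positivity)⟩
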